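/- The universality problem for integer weighted automata on infinite words under reverse acceptance is undecidable: the predicate on encoded integer weighted automata ℬ asserting that L_R(ℬ) = A^ω, i.e., that every infinite word over the alphabet is accepted by ℬ under reverse acceptance, is not a computable predicate. -/

import Mathlib

/-- A code for an integer weighted automaton: the number of states `n` (states are
`0, …, n-1`), the number of letters `m` (letters are `0, …, m-1`), the list of transitions
`(source state, letter, target state, weight)`, the initial state, and the list of final
states. -/
abbrev WACode : Type := ℕ × ℕ × List (ℕ × ℕ × ℕ × ℤ) × ℕ × List ℕ

/-- The code describes a genuine complete integer weighted automaton: all data are in range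
and for every state `q` and letter `x` there is at least one transition `(q, x, p, z)`. -/
def WAWellFormed : WACode → Prop
  | (n, m, ts, q0, fs) =>
    q0 < n ∧ (∀ q ∈ fs, q < n) ∧
    (∀ t ∈ ts, t.1 < n ∧ t.2.1 < m ∧ t.2.2.1 < n) ∧
    (∀ q < n, ∀ x < m, ∃ p z, (q, x, p, z) ∈ ts)

/-- `π` is a path for the infinite word `w` over the transition list `ts` starting in `q0`. -/
def WAIsPath (ts : List (ℕ × ℕ × ℕ × ℤ)) (q0 : ℕ) (w : ℕ → ℕ)
    (π : ℕ → ℕ × ℕ × ℕ × ℤ) : Prop :=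
  (∀ j, π j ∈ ts) ∧ (π 0).1 = q0 ∧ (∀ j, (π j).2.2.1 = (π (j + 1)).1) ∧ (∀ j, (π j).2.1 = w j)

/-- The encoded automaton accepts the infinite word `w` under *reverse acceptance*: some
path for `w` has a finite prefix `p = t₀⋯t_k` whose reversal `p^R = t_k⋯t₀` has weight `0`
(the weights are summed in reversed order), reaching a final state. -/
def WAAcceptsRevCode : WACode → (ℕ → ℕ) → Prop
  | (_, _, ts, q0, fs), w =>
    ∃ π, WAIsPath ts q0 w π ∧
      ∃ k, (∑ j ∈ Finset.range (k + 1), (π (k - j)).2.2.2) = 0 ∧ (π k).2.2.1 ∈ fs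

/-- `L_R(ℬ) = A^ω`: every infinite word over the alphabet is accepted under reverse
acceptance. -/
def WAUniversalRev (c : WACode) : Prop :=
  ∀ w : ℕ → ℕ, (∀ i, w i < c.2.1) → WAAcceptsRevCode c w

/-!
Halting of a fixed Turing machine on unary inputs is reduced to universality. The machine is first
turned into a queue machine, whose queue holds the tape as a cyclic word. Read an infinite word as
the successive letters that the queue machine removes from its queue. The queue after `k` steps is
then the block of the word starting at position `k`, so only its length has to be remembered, and
the weight can do that. A word that is not such a log contains a letter which differs from the one
appended `d` steps earlier, where `d` is the distance of the appended letter from the front of the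
queue; the automaton guesses the letter and counts `d` down to `0`. It also accepts once the queue
machine has halted, so a word is rejected only if it is the log of an infinite computation.
-/

theorem exists_infinite_run_of_not_dom_eval {σ : Type*} {f : σ → Option σ} {a : σ}
    (h : ¬ (StateTransition.eval f a).Dom) :
    ∃ c : ℕ → σ, c 0 = a ∧ ∀ k, f (c k) = some (c (k + 1)) := by
  have exists_next (b : {b // StateTransition.Reaches f a b}) :
      ∃ b' : {b // StateTransition.Reaches f a b}, f b = some b'.1 := by
    rcases hb : f b.1 with _ | b'
    · exact absurd (Part.dom_iff_mem.2 ⟨b.1, StateTransition.mem_eval.2 ⟨b.2, hb⟩⟩) h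
    · exact ⟨⟨b', b.2.tail hb⟩, rfl⟩
  choose next hnext using exists_next
  let start : {b // StateTransition.Reaches f a b} := ⟨a, Relation.ReflTransGen.refl⟩
  refine ⟨fun k => (next^[k] start).1, rfl, fun k => ?_⟩
  simp only [Function.iterate_succ_apply']
  exact hnext _

/-! ### Queue machines -/

/-- A queue machine with control states `Q` and queue letters `B`. It removes the first letter of
its queue and, unless the rule for the current state and that letter is `none`, changes state and
appends a word to the end of the queue. It halts where there is no rule or the queue is empty. -/
structure QueueMachine (Q B : Type*) where
  next : Q → B → Option (Q × List B)

namespace QueueMachine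

variable {Q B : Type*}

/-- One step of a queue machine on configurations `(state, queue)`. -/
def step (T : QueueMachine Q B) : Q × List B → Option (Q × List B)
  | (_, []) => none
  | (q, a :: v) => (T.next q a).map fun r => (r.1, v ++ r.2)

/-- The queue machine halts when started in the given configuration. -/
def Halts (T : QueueMachine Q B) (c : Q × List B) : Prop :=
  (StateTransition.eval T.step c).Dom

/-- Every rule appends at least one letter, so a nonempty queue never becomes empty. -/
def Nonerasing (T : QueueMachine Q B) : Prop :=
  ∀ q a q' o, T.next q a = some (q', o) → o ≠ []

theorem step_cons_of_next {T : QueueMachine Q B} {q q' : Q} {a : B} {o : List B} (v : List B)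
    (h : T.next q a = some (q', o)) : T.step (q, a :: v) = some (q', v ++ o) := by
  simp only [step, h, Option.map_some]

theorem exists_of_step_eq_some {T : QueueMachine Q B} {c c' : Q × List B}
    (h : T.step c = some c') :
    ∃ a v o, c.2 = a :: v ∧ T.next c.1 a = some (c'.1, o) ∧ c'.2 = v ++ o := by
  obtain ⟨q, _ | ⟨a, v⟩⟩ := c
  · exact absurd h (by simp [step])
  · obtain ⟨r, hr, rfl⟩ := Option.map_eq_some_iff.1 h
    exact ⟨a, v, r.2, rfl, hr, rfl⟩

theorem exists_of_step_eq_none {T : QueueMachine Q B} {c : Q × List B} (h : T.step c = none)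
    (hc : c.2 ≠ []) : ∃ a v, c.2 = a :: v ∧ T.next c.1 a = none := by
  obtain ⟨q, _ | ⟨a, v⟩⟩ := c
  · exact absurd rfl hc
  · exact ⟨a, v, rfl, Option.map_eq_none_iff.1 h⟩

end QueueMachine

/-! ### Weighted automata -/

/-- An integer weighted automaton with states `St` over the alphabet `B`; `succ s a` lists the
targets and weights of the transitions from `s` on the letter `a`. -/
structure WeightedAutomaton (St B : Type*) where
  succ : St → B → List (St × ℤ)
  init : St
  final : List St

namespace WeightedAutomaton

variable {St B : Type*}

/-- Every state has a transition on every letter. -/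
def Complete (A : WeightedAutomaton St B) : Prop :=
  ∀ s a, A.succ s a ≠ []

/-- `A.Reaches w k s z`: some path of `A` leads from the initial state to `s` with weight `z` on
the first `k` letters of `w`. -/
inductive Reaches (A : WeightedAutomaton St B) (w : ℕ → B) : ℕ → St → ℤ → Prop
  | zero : A.Reaches w 0 A.init 0
  | step {k s z s' y z'} : A.Reaches w k s z → (s', y) ∈ A.succ s (w k) → z + y = z' →
      A.Reaches w (k + 1) s' z'

/-- Reverse acceptance of an infinite word. Since `ℤ` is commutative, the weight of the reversal
of a path is the weight of the path; in a complete automaton every finite path is a prefix of an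
infinite one. -/
def AcceptsRev (A : WeightedAutomaton St B) (w : ℕ → B) : Prop :=
  ∃ k, ∃ s ∈ A.final, A.Reaches w (k + 1) s 0

/-- Every infinite word is accepted under reverse acceptance. -/
def Universal (A : WeightedAutomaton St B) : Prop :=
  ∀ w, A.AcceptsRev w

end WeightedAutomaton

/-- The word `v` occurs in the infinite word `w` at position `k`. -/
def OccursAt {B : Type*} (w : ℕ → B) (k : ℕ) (v : List B) : Prop :=
  ∀ (i : ℕ) (b : B), v[i]? = some b → w (k + i) = b

namespace OccursAt

variable {B : Type*} {w : ℕ → B} {k : ℕ} {v : List B}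

theorem cons_iff {a : B} : OccursAt w k (a :: v) ↔ w k = a ∧ OccursAt w (k + 1) v := by
  refine ⟨fun h => ⟨h 0 a rfl, fun i b hb => ?_⟩, fun h i b hb => ?_⟩
  · rw [add_assoc, add_comm 1]
    exact h (i + 1) b hb
  · cases i with
    | zero => exact h.1.trans (Option.some.inj hb)
    | succ i =>
      rw [add_comm i, ← add_assoc]
      exact h.2 i b hb

theorem append_iff {v' : List B} :
    OccursAt w k (v ++ v') ↔ OccursAt w k v ∧ OccursAt w (k + v.length) v' := by
  induction v generalizing k with
  | nil => simp [OccursAt]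
  | cons a v ih =>
    rw [List.cons_append, cons_iff, cons_iff, ih, and_assoc, List.length_cons, add_assoc,
      add_comm 1]

end OccursAt

namespace QueueMachine

/-! ### The refuter of a queue machine -/

variable {Q B : Type*}

/-- The states of the refuter: `run q` follows the queue machine, `await b` waits for the position
at which the appended letter `b` should reappear, `caught` records that a different letter was
found there, and `drain` counts down after the queue machine has halted. -/
inductive RefuterState (Q B : Type*)
  | run (q : Q)
  | await (b : B)
  | caught
  | drain

open RefuterState

/-- The refuter's transitions out of `run q`, given the rule which the queue machine applies. In the
state `run q` the weight is the length of the queue minus one, hence the distance from the next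
letter to the first appended one. -/
def runSucc : Option (Q × List B) → List (RefuterState Q B × ℤ)
  | none => [(drain, 0)]
  | some (q, o) => (run q, o.length - 1) :: o.zipIdx.map fun p => (await p.1, p.2)

variable {T : QueueMachine Q B} {q₀ : Q} {w : ℕ → B}

theorem occursAt_queue {c : ℕ → Q × List B} (hc : ∀ k, T.step (c k) = some (c (k + 1)))
    (hw : ∀ k, (c k).2.head? = some (w k)) (k : ℕ) : OccursAt w k (c k).2 := by
  intro i
  induction i generalizing k with
  | zero =>
    intro b hb
    rw [← List.head?_eq_getElem?, hw] at hb
    exact Option.some.inj hb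
  | succ i ih =>
    intro b hb
    obtain ⟨a, v, o, hv, -, hv'⟩ := exists_of_step_eq_some (hc k)
    rw [hv, List.getElem?_cons_succ] at hb
    rw [add_comm i, ← add_assoc]
    refine ih (k + 1) b ?_
    rw [hv', List.getElem?_append_left (List.getElem?_eq_some_iff.1 hb).1, hb]

/-- The weighted automaton that looks for an error in, or for the end of, the computation described
by an infinite word; the initial queue consists of the first letter of the word. -/
def refuter [DecidableEq B] (T : QueueMachine Q B) (q₀ : Q) :
    WeightedAutomaton (RefuterState Q B) B where
  succ
    | run q, a => runSucc (T.next q a)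
    | await b, a => (await b, -1) :: if a = b then [] else [(caught, 0)]
    | caught, _ => [(caught, 0)]
    | drain, _ => [(drain, -1)]
  init := run q₀
  final := [caught, drain]

variable [DecidableEq B]

theorem complete_refuter (T : QueueMachine Q B) (q₀ : Q) : (T.refuter q₀).Complete := by
  intro s a
  cases s with
  | run q => simp only [refuter, runSucc]; split <;> exact List.cons_ne_nil _ _
  | _ => exact List.cons_ne_nil _ _

theorem acceptsRev_refuter_of_reaches_drain (m : ℕ) {k : ℕ}
    (h : (T.refuter q₀).Reaches w (k + 1) drain m) : (T.refuter q₀).AcceptsRev w := by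
  induction m generalizing k with
  | zero => exact ⟨k, drain, by simp [refuter], h⟩
  | succ m ih => exact ih (h.step (List.mem_singleton_self _) (by push_cast; ring))

theorem acceptsRev_refuter_of_reaches_await (m : ℕ) {k : ℕ} {b : B}
    (h : (T.refuter q₀).Reaches w k (await b) m) (hb : w (k + m) ≠ b) :
    (T.refuter q₀).AcceptsRev w := by
  induction m generalizing k with
  | zero =>
    rw [add_zero] at hb
    refine ⟨k, caught, by simp [refuter], h.step (y := 0) ?_ rfl⟩
    simp only [refuter, if_neg hb, List.mem_cons, true_or, or_true]
  | succ m ih =>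
    refine ih (h.step List.mem_cons_self (by push_cast; ring)) ?_
    rwa [add_assoc, add_comm 1]

theorem occursAt_output_of_not_acceptsRev_refuter (hw : ¬ (T.refuter q₀).AcceptsRev w) {k n : ℕ}
    {q q' : Q} {o : List B} (h : (T.refuter q₀).Reaches w k (run q) n)
    (ho : T.next q (w k) = some (q', o)) : OccursAt w (k + 1 + n) o := by
  intro i b hi
  by_contra hb
  refine hw (acceptsRev_refuter_of_reaches_await (n + i) (h.step (y := i) ?_ (by push_cast; rfl))
    (by rwa [← add_assoc]))
  simp only [refuter, ho, runSucc, List.mem_cons, List.mem_map, Prod.exists]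
  exact .inr ⟨b, i, List.mk_mem_zipIdx_iff_getElem?.2 hi, rfl⟩

theorem exists_reaches_run_of_not_acceptsRev_refuter (hT : T.Nonerasing)
    (hw : ¬ (T.refuter q₀).AcceptsRev w) {c : Q × List B}
    (hc : StateTransition.Reaches T.step (q₀, [w 0]) c) :
    ∃ k n : ℕ, c.2.length = n + 1 ∧ OccursAt w k c.2 ∧
      (T.refuter q₀).Reaches w k (run c.1) n := by
  induction hc with
  | refl => exact ⟨0, 0, rfl, OccursAt.cons_iff.2 ⟨rfl, by simp [OccursAt]⟩, .zero⟩
  | tail _ hstep ih =>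
    obtain ⟨k, n, hn, hocc, hreach⟩ := ih
    obtain ⟨a, v, o, hv, ho, hv'⟩ := exists_of_step_eq_some hstep
    rw [hv, List.length_cons, Nat.add_right_cancel_iff] at hn
    rw [hv, OccursAt.cons_iff] at hocc
    rw [← hocc.1] at ho
    obtain ⟨l, hl⟩ := Nat.exists_eq_succ_of_ne_zero (List.length_pos_of_ne_nil (hT _ _ _ _ ho)).ne'
    refine ⟨k + 1, n + l, by simp [hv', hn, hl, add_assoc], ?_, ?_⟩
    · rw [hv', OccursAt.append_iff, hn]
      exact ⟨hocc.2, occursAt_output_of_not_acceptsRev_refuter hw hreach ho⟩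
    · refine hreach.step (y := l) ?_ (by push_cast; rfl)
      simp only [refuter, ho, runSucc, hl]
      exact List.mem_cons.2 (.inl (by simp))

theorem universal_refuter_of_halts (hT : T.Nonerasing) (h : ∀ a, T.Halts (q₀, [a])) :
    (T.refuter q₀).Universal := by
  intro w
  by_contra hw
  obtain ⟨c, hc⟩ := Part.dom_iff_mem.1 (h (w 0))
  obtain ⟨hreach, hhalt⟩ := StateTransition.mem_eval.1 hc
  obtain ⟨k, n, hn, hocc, hrun⟩ := exists_reaches_run_of_not_acceptsRev_refuter hT hw hreach
  obtain ⟨a, v, hv, hnone⟩ := exists_of_step_eq_none hhalt (List.ne_nil_of_length_eq_add_one hn)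
  rw [hv, OccursAt.cons_iff] at hocc
  refine hw (acceptsRev_refuter_of_reaches_drain n (hrun.step (y := 0) ?_ (add_zero _)))
  simp only [refuter, hocc.1, hnone, runSucc, List.mem_singleton_self]

/-- What a run of the refuter can have found out after `k` letters of the infinite word `w` that
correctly describes the infinite computation `c`. -/
def RefuterInvariant (c : ℕ → Q × List B) (w : ℕ → B) (k : ℕ) (z : ℤ) : RefuterState Q B → Prop
  | run q => q = (c k).1 ∧ z = (c k).2.length - 1
  | await b => ∀ m : ℕ, z = m → w (k + m) = b
  | caught => z ≠ 0
  | drain => z < 0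

theorem refuterInvariant_step {c : ℕ → Q × List B}
    (hc : ∀ k, T.step (c k) = some (c (k + 1))) (hw : ∀ k, (c k).2.head? = some (w k))
    {k : ℕ} {s s' : RefuterState Q B} {z y : ℤ} (h : RefuterInvariant c w k z s)
    (hs : (s', y) ∈ (T.refuter q₀).succ s (w k)) :
    RefuterInvariant c w (k + 1) (z + y) s' := by
  cases s with
  | run q =>
    obtain ⟨rfl, rfl⟩ := h
    obtain ⟨a, v, o, hv, ho, hv'⟩ := exists_of_step_eq_some (hc k)
    obtain rfl : a = w k := by simpa only [hv, List.head?_cons, Option.some.injEq] using hw k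
    simp only [refuter, ho, runSucc, List.mem_cons, List.mem_map, Prod.mk.injEq, Prod.exists] at hs
    rcases hs with ⟨rfl, rfl⟩ | ⟨b, i, hbi, rfl, rfl⟩
    · exact ⟨rfl, by rw [hv, hv']; simp only [List.length_cons, List.length_append]; omega⟩
    · intro m hm
      obtain rfl : m = v.length + i := by simp only [hv, List.length_cons] at hm; omega
      refine occursAt_queue hc hw (k + 1) (v.length + i) b ?_
      rw [hv', List.getElem?_append_right (Nat.le_add_right _ _), Nat.add_sub_cancel_left]
      exact List.mk_mem_zipIdx_iff_getElem?.1 hbi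
  | await b =>
    rcases List.mem_cons.1 hs with hs | hs
    · obtain ⟨rfl, rfl⟩ := Prod.mk.inj hs
      intro m hm
      rw [add_assoc, add_comm 1]
      exact h (m + 1) (by push_cast; omega)
    · split_ifs at hs with hb
      · exact absurd hs List.not_mem_nil
      · obtain ⟨rfl, rfl⟩ := Prod.mk.inj (List.mem_singleton.1 hs)
        intro hz
        exact hb (h 0 (by simpa using hz))
  | caught =>
    obtain ⟨rfl, rfl⟩ := Prod.mk.inj (List.mem_singleton.1 hs)
    rwa [add_zero]
  | drain =>
    obtain ⟨rfl, rfl⟩ := Prod.mk.inj (List.mem_singleton.1 hs)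
    exact add_neg h neg_one_lt_zero

theorem halts_of_universal_refuter (h : (T.refuter q₀).Universal) (a : B) :
    T.Halts (q₀, [a]) := by
  by_contra hinf
  obtain ⟨c, hc0, hc⟩ := exists_infinite_run_of_not_dom_eval hinf
  choose w hw using fun k => (exists_of_step_eq_some (hc k)).imp fun a h =>
    show (c k).2.head? = some a by
      obtain ⟨v, o, hv, -⟩ := h
      rw [hv, List.head?_cons]
  have invariant {k s z} (hr : (T.refuter q₀).Reaches w k s z) : RefuterInvariant c w k z s := by
    induction hr with
    | zero => simp [refuter, RefuterInvariant, hc0]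
    | step _ hs hz ih => exact hz ▸ refuterInvariant_step hc hw ih hs
  obtain ⟨k, s, hs, hr⟩ := h w
  have hinv := invariant hr
  simp only [refuter, List.mem_cons, List.not_mem_nil, or_false] at hs
  rcases hs with rfl | rfl
  · exact hinv rfl
  · exact lt_irrefl _ hinv

theorem universal_refuter_iff (hT : T.Nonerasing) :
    (T.refuter q₀).Universal ↔ ∀ a, T.Halts (q₀, [a]) :=
  ⟨halts_of_universal_refuter, universal_refuter_of_halts hT⟩

end QueueMachine

/-! ### Codes of weighted automata -/

namespace WeightedAutomaton

variable {St B : Type*} {A : WeightedAutomaton St B} {w : ℕ → B}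

/-- `S` and `Z` are the states and the weights along a path of `A` that starts in the state `S 0`
and is labelled by the infinite word `w`. -/
def IsRun (A : WeightedAutomaton St B) (w : ℕ → B) (S : ℕ → St) (Z : ℕ → ℤ) : Prop :=
  ∀ j, (S (j + 1), Z j) ∈ A.succ (S j) (w j)

theorem Complete.exists_isRun (hA : A.Complete) (w : ℕ → B) (s : St) :
    ∃ S Z, A.IsRun w S Z ∧ S 0 = s := by
  choose next hnext using fun s a => List.exists_mem_of_ne_nil _ (hA s a)
  let S : ℕ → St := Nat.rec s fun j s' => (next s' (w j)).1
  exact ⟨S, fun j => (next (S j) (w j)).2, fun j => hnext (S j) (w j), rfl⟩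

theorem IsRun.reaches {S : ℕ → St} {Z : ℕ → ℤ} (h : A.IsRun w S Z) (h0 : S 0 = A.init) (k : ℕ) :
    A.Reaches w k (S k) (∑ j ∈ Finset.range k, Z j) := by
  induction k with
  | zero => exact h0 ▸ .zero
  | succ k ih => exact ih.step (h k) (Finset.sum_range_succ Z k).symm

theorem Reaches.exists_isRun_append {k : ℕ} {s : St} {z : ℤ} (h : A.Reaches w k s z)
    {S' : ℕ → St} {Z' : ℕ → ℤ} (hrun : A.IsRun (fun j => w (k + j)) S' Z') (hs : S' 0 = s) :
    ∃ S Z, A.IsRun w S Z ∧ S 0 = A.init ∧ ∑ j ∈ Finset.range k, Z j = z ∧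
      ∀ j, S (k + j) = S' j ∧ Z (k + j) = Z' j := by
  induction h generalizing S' Z' with
  | zero => exact ⟨S', Z', by simpa only [zero_add] using hrun, hs, rfl, by simp⟩
  | @step k s z s' y z' _ hs' hz ih =>
    obtain ⟨S, Z, hSZ, h0, hsum, happ⟩ := ih (S' := fun j => j.casesOn s S')
      (Z' := fun j => j.casesOn y Z') (fun j => by
        cases j with
        | zero => subst hs; exact hs'
        | succ j => simpa only [add_assoc, add_comm 1] using hrun j) rfl
    refine ⟨S, Z, hSZ, h0, ?_, fun j => ?_⟩
    · rw [Finset.sum_range_succ, hsum, ← hz]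
      exact congrArg (z + ·) (happ 0).2
    · rw [add_assoc, add_comm 1]
      exact happ (j + 1)

theorem Complete.acceptsRev_iff (hA : A.Complete) :
    A.AcceptsRev w ↔ ∃ S Z, A.IsRun w S Z ∧ S 0 = A.init ∧
      ∃ k, ∑ j ∈ Finset.range (k + 1), Z j = 0 ∧ S (k + 1) ∈ A.final := by
  constructor
  · rintro ⟨k, s, hs, hr⟩
    obtain ⟨S', Z', hrun', hs'⟩ := hA.exists_isRun (fun j => w (k + 1 + j)) s
    obtain ⟨S, Z, hrun, h0, hsum, happ⟩ := hr.exists_isRun_append hrun' hs'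
    refine ⟨S, Z, hrun, h0, k, hsum, ?_⟩
    rwa [show S (k + 1) = s from (happ 0).1.trans hs']
  · rintro ⟨S, Z, hrun, h0, k, hsum, hs⟩
    exact ⟨k, S (k + 1), hs, hsum ▸ hrun.reaches h0 (k + 1)⟩

section Code

variable {N m : ℕ} (e : St ≃ Fin N) (f : B ≃ Fin m)

/-- The transition list of `A` after numbering its states by `e` and its letters by `f`. -/
def transitionCodes (A : WeightedAutomaton St B) : List (ℕ × ℕ × ℕ × ℤ) :=
  (List.finRange N).flatMap fun p => (List.finRange m).flatMap fun x =>
    (A.succ (e.symm p) (f.symm x)).map fun t => (p, x, e t.1, t.2)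

/-- The code of `A` under the numberings `e` of its states and `f` of its letters. -/
def code (A : WeightedAutomaton St B) : WACode :=
  (N, m, A.transitionCodes e f, e A.init, A.final.map fun s => (e s : ℕ))

variable {e f}

theorem mem_transitionCodes {t : ℕ × ℕ × ℕ × ℤ} :
    t ∈ A.transitionCodes e f ↔
      ∃ s a s' z, (s', z) ∈ A.succ s a ∧ ((e s : ℕ), (f a : ℕ), (e s' : ℕ), z) = t := by
  simp only [transitionCodes, List.mem_flatMap, List.mem_finRange, List.mem_map, Prod.exists,
    true_and]
  constructor
  · rintro ⟨p, x, s', z, hs', rfl⟩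
    exact ⟨_, _, s', z, hs', by simp⟩
  · rintro ⟨s, a, s', z, hs', rfl⟩
    exact ⟨e s, f a, s', z, by simpa using hs', rfl⟩

theorem mk_mem_transitionCodes {s s' : St} {a : B} {z : ℤ} :
    ((e s : ℕ), (f a : ℕ), (e s' : ℕ), z) ∈ A.transitionCodes e f ↔ (s', z) ∈ A.succ s a := by
  simp [mem_transitionCodes, Fin.val_inj]

theorem waIsPath_iff {π : ℕ → ℕ × ℕ × ℕ × ℤ} :
    WAIsPath (A.transitionCodes e f) (e A.init) (fun j => f (w j)) π ↔
      ∃ S Z, A.IsRun w S Z ∧ S 0 = A.init ∧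
        ∀ j, π j = ((e (S j) : ℕ), (f (w j) : ℕ), (e (S (j + 1)) : ℕ), Z j) := by
  constructor
  · rintro ⟨hmem, h0, hnext, hletter⟩
    choose S a S' Z hsucc hπ using fun j => mem_transitionCodes.1 (hmem j)
    have ha (j) : a j = w j := by simpa [← hπ, Fin.val_inj] using hletter j
    have hS (j) : S' j = S (j + 1) := by simpa [← hπ, Fin.val_inj] using hnext j
    refine ⟨S, Z, fun j => ?_, ?_, fun j => ?_⟩
    · rw [← ha, ← hS]; exact hsucc j
    · simpa [← hπ, Fin.val_inj] using h0
    · rw [← ha, ← hS, hπ]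
  · rintro ⟨S, Z, hrun, h0, hπ⟩
    refine ⟨fun j => ?_, ?_, fun j => ?_, fun j => ?_⟩
    · rw [hπ, mk_mem_transitionCodes]; exact hrun j
    · rw [hπ, h0]
    · rw [hπ, hπ]
    · rw [hπ]

theorem waAcceptsRevCode_code_iff (hA : A.Complete) :
    WAAcceptsRevCode (A.code e f) (fun j => f (w j)) ↔ A.AcceptsRev w := by
  have sum_reverse (Z : ℕ → ℤ) (k : ℕ) :
      ∑ j ∈ Finset.range (k + 1), Z (k - j) = ∑ j ∈ Finset.range (k + 1), Z j :=
    Finset.sum_range_reflect Z (k + 1)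
  have mem_final (s : St) : (e s : ℕ) ∈ A.final.map (fun s => (e s : ℕ)) ↔ s ∈ A.final := by
    simp [Fin.val_inj]
  rw [hA.acceptsRev_iff]
  constructor
  · rintro ⟨π, hπ, k, hsum, hfin⟩
    obtain ⟨S, Z, hrun, h0, hπ⟩ := waIsPath_iff.1 hπ
    simp only [hπ, sum_reverse, mem_final] at hsum hfin
    exact ⟨S, Z, hrun, h0, k, hsum, hfin⟩
  · rintro ⟨S, Z, hrun, h0, k, hsum, hs⟩
    refine ⟨_, waIsPath_iff.2 ⟨S, Z, hrun, h0, fun _ => rfl⟩, k, ?_, (mem_final _).2 hs⟩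
    exact (sum_reverse Z k).trans hsum

theorem waUniversalRev_code_iff (hA : A.Complete) :
    WAUniversalRev (A.code e f) ↔ A.Universal := by
  constructor
  · exact fun h w => (waAcceptsRevCode_code_iff hA).1 (h _ fun i => (f (w i)).2)
  · intro h v hv
    have hv' : v = fun j => (f (f.symm ⟨v j, hv j⟩) : ℕ) := by simp
    rw [hv']
    exact (waAcceptsRevCode_code_iff hA).2 (h _)

theorem waWellFormed_code (hA : A.Complete) : WAWellFormed (A.code e f) := by
  refine ⟨(e _).2, fun q hq => ?_, fun t ht => ?_, fun q hq x hx => ?_⟩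
  · obtain ⟨s, -, rfl⟩ := List.mem_map.1 hq
    exact (e s).2
  · obtain ⟨s, a, s', z, -, rfl⟩ := mem_transitionCodes.1 ht
    exact ⟨(e s).2, (f a).2, (e s').2⟩
  · obtain ⟨⟨s', z⟩, hmem⟩ := List.exists_mem_of_ne_nil _ (hA (e.symm ⟨q, hq⟩) (f.symm ⟨x, hx⟩))
    exact ⟨e s', z, mem_transitionCodes.2 ⟨_, _, s', z, hmem, by simp⟩⟩

end Code

end WeightedAutomaton

/-! ### Computability of the codes -/

theorem nonempty_primcodable_of_finite (α : Type*) [Finite α] : Nonempty (Primcodable α) := by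
  obtain ⟨n, ⟨e⟩⟩ := Finite.exists_equiv_fin α
  exact ⟨Primcodable.ofEquiv (Fin n) e⟩

theorem primrec_intCast : Primrec fun n : ℕ => (n : ℤ) :=
  -- The encoding of `ℤ` sends `n : ℕ` to `2 * n` and `-(n + 1)` to `2 * n + 1`.
  Primrec.encode_iff.1 (Primrec.nat_mul.comp (Primrec.const 2) Primrec.id)

theorem primrec_intCast_sub_one : Primrec fun n : ℕ => (n : ℤ) - 1 := by
  refine (Primrec.nat_casesOn Primrec.id (Primrec.const (-1))
    (primrec_intCast.comp Primrec.snd).to₂).of_eq fun n => ?_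
  cases n <;> simp

section ListPrimrec

variable {α β γ : Type*} [Primcodable α]

theorem primrec_zipIdx : Primrec fun l : List α => l.zipIdx := by
  have append_index : Primrec₂ fun (_ : List α) (p : List (α × ℕ) × α) =>
      p.1 ++ [(p.2, p.1.length)] := by
    have hacc : Primrec fun x : List α × List (α × ℕ) × α => x.2.1 :=
      Primrec.fst.comp Primrec.snd
    exact Primrec.list_append.comp hacc (Primrec.list_cons.comp
      ((Primrec.snd.comp Primrec.snd).pair (Primrec.list_length.comp hacc)) (Primrec.const []))
  refine (Primrec.list_foldl Primrec.id (Primrec.const []) append_index).of_eq fun l => ?_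
  induction l using List.reverseRecOn with
  | nil => rfl
  | append_singleton l a ih =>
    simp only [id_eq, List.foldl_append, List.foldl_cons, List.foldl_nil] at ih ⊢
    rw [ih, List.zipIdx_append, List.length_zipIdx, zero_add, List.zipIdx_singleton]

theorem primrec_flatMap_const [Primcodable γ] {g : β → α → List γ} (hg : ∀ b, Primrec (g b))
    (l : List β) : Primrec fun x => l.flatMap fun b => g b x := by
  induction l with
  | nil => exact Primrec.const []
  | cons b l ih => exact Primrec.list_append.comp (hg b) ih

end ListPrimrec

theorem WeightedAutomaton.primrec_code {α St B : Type*} [Primcodable α] [Primcodable St] [Finite St]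
    {A : α → WeightedAutomaton St B} (hsucc : ∀ s a, Primrec fun x => (A x).succ s a)
    (hinit : Primrec fun x => (A x).init) (hfinal : Primrec fun x => (A x).final)
    {N m : ℕ} (e : St ≃ Fin N) (f : B ≃ Fin m) : Primrec fun x => (A x).code e f := by
  have hnum : Primrec fun s : St => (e s : ℕ) := Primrec.dom_finite _
  refine (Primrec.const N).pair ((Primrec.const m).pair (Primrec.pair ?_
    ((hnum.comp hinit).pair (Primrec.list_map hfinal (hnum.comp Primrec.snd).to₂))))
  refine primrec_flatMap_const (fun p => primrec_flatMap_const (fun x => ?_) _) _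
  refine Primrec.list_map (hsucc _ _) ?_
  exact (Primrec.const _).pair ((Primrec.const _).pair
    ((hnum.comp (Primrec.fst.comp Primrec.snd)).pair (Primrec.snd.comp Primrec.snd)))

namespace QueueMachine

variable {Q B : Type*}

instance [Finite Q] [Finite B] : Finite (RefuterState Q B) := by
  refine Finite.of_surjective (α := Option (Option (Q ⊕ B)))
    (fun
      | none => .drain
      | some none => .caught
      | some (some (.inl q)) => .run q
      | some (some (.inr b)) => .await b) ?_
  rintro (q | b | _ | _)
  exacts [⟨some (some (.inl q)), rfl⟩, ⟨some (some (.inr b)), rfl⟩, ⟨some none, rfl⟩, ⟨none, rfl⟩]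

theorem primrec_runSucc [Primcodable Q] [Primcodable B] [Primcodable (RefuterState Q B)]
    [Finite Q] [Finite B] : Primrec (runSucc (Q := Q) (B := B)) := by
  have hrun : Primrec (RefuterState.run : Q → RefuterState Q B) := Primrec.dom_finite _
  have hawait : Primrec (RefuterState.await : B → RefuterState Q B) := Primrec.dom_finite _
  have hsome : Primrec fun r : Q × List B =>
      (RefuterState.run r.1, (r.2.length : ℤ) - 1) ::
        r.2.zipIdx.map fun p => (RefuterState.await p.1, (p.2 : ℤ)) := by
    refine Primrec.list_cons.comp
      ((hrun.comp Primrec.fst).pair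
        (primrec_intCast_sub_one.comp (Primrec.list_length.comp Primrec.snd)))
      (Primrec.list_map (primrec_zipIdx.comp Primrec.snd) ?_)
    exact (hawait.comp (Primrec.fst.comp Primrec.snd)).pair
      (primrec_intCast.comp (Primrec.snd.comp Primrec.snd))
  refine (Primrec.option_casesOn Primrec.id (Primrec.const [(RefuterState.drain, 0)])
    (hsome.comp Primrec.snd).to₂).of_eq fun r => ?_
  cases r <;> rfl

theorem exists_computable_code {α Q B : Type*} [Primcodable α] [Primcodable Q] [Primcodable B]
    [Finite Q] [Finite B] {T : α → QueueMachine Q B} (hT : ∀ q a, Primrec fun x => (T x).next q a)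
    (hne : ∀ x, (T x).Nonerasing) (q₀ : Q) :
    ∃ c : α → WACode, Computable c ∧
      ∀ x, (WAWellFormed (c x) ∧ WAUniversalRev (c x)) ↔ ∀ a, (T x).Halts (q₀, [a]) := by
  classical
  obtain ⟨_⟩ := nonempty_primcodable_of_finite (RefuterState Q B)
  obtain ⟨N, ⟨e⟩⟩ := Finite.exists_equiv_fin (RefuterState Q B)
  obtain ⟨m, ⟨f⟩⟩ := Finite.exists_equiv_fin B
  refine ⟨fun x => ((T x).refuter q₀).code e f, Primrec.to_comp
    (WeightedAutomaton.primrec_code (A := fun x => (T x).refuter q₀) (fun s a => ?_)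
      (Primrec.const _) (Primrec.const _) e f),
    fun x => ?_⟩
  · cases s with
    | run q => exact primrec_runSucc.comp (hT q a)
    | _ => exact Primrec.const _
  · have hA := complete_refuter (T x) q₀
    rw [WeightedAutomaton.waUniversalRev_code_iff hA, universal_refuter_iff (hne x)]
    exact and_iff_right (WeightedAutomaton.waWellFormed_code hA)

end QueueMachine

/-! ### Queue machines simulate Turing machines -/

/-- The letters of the cyclic word that represents a Turing machine configuration: `mark` separates
the right end of the tape from its left end, and `head q a` is the scanned cell, holding `a`, while
the machine is in state `q`. -/
inductive TapeLetter (Γ Λ : Type*)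
  | mark
  | sym (a : Γ)
  | head (q : Λ) (a : Γ)

/-- The control states of the queue machine simulating a Turing machine: `load` is initial,
`hold p` remembers the last letter read, so that it can still be changed, and `carry q a` is in the
middle of a move to the right, off a cell holding `a` and into the state `q`. -/
inductive TapeControl (Γ Λ : Type*)
  | load
  | hold (p : TapeLetter Γ Λ)
  | carry (q : Λ) (a : Γ)

namespace QueueMachine

open Turing TapeLetter TapeControl
open StateTransition (Reaches Reaches₁)

variable {Γ Λ : Type*}

/-- The configuration in which the queue followed by the held letter is the word `W`. -/
def wordCfg (W : List (TapeLetter Γ Λ)) : TapeControl Γ Λ × List (TapeLetter Γ Λ) :=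
  (hold (W.getLastD mark), W.dropLast)

/-- The word contains no scanned cell. -/
def Headless (W : List (TapeLetter Γ Λ)) : Prop :=
  ∀ q a, head q a ∉ W

/-- The cyclic word of the configuration with state `q`, scanned symbol `a`, and the symbols `X` to
the left and `Y` to the right of the head, both listed from the head outwards. -/
def tapeWord (q : Λ) (a : Γ) (X Y : List Γ) : List (TapeLetter Γ Λ) :=
  head q a :: (Y.map sym ++ mark :: X.reverse.map sym)

theorem wordCfg_concat (V : List (TapeLetter Γ Λ)) (p : TapeLetter Γ Λ) :
    wordCfg (V ++ [p]) = (hold p, V) := by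
  simp [wordCfg]

theorem headless_map_sym_append_mark_cons (X Y : List Γ) :
    Headless (X.map sym ++ mark :: Y.map sym : List (TapeLetter Γ Λ)) := by
  simp [Headless]

variable [Inhabited Γ] [Inhabited Λ]

/-- The rule that applies to the scanned cell, holding `a`, when the held letter `p` is its left
neighbour on the cyclic word. Beyond either end of the represented tape, cells are blank. -/
def headRule (p : TapeLetter Γ Λ) (a : Γ) :
    Option (Λ × TM0.Stmt Γ) → Option (TapeControl Γ Λ × List (TapeLetter Γ Λ))
  | none => none
  | some (q, .write b) => some (hold (head q b), [p])
  | some (q, .move .right) => some (carry q a, [p])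
  | some (q, .move .left) =>
    match p with
    | sym x => some (hold (sym a), [head q x])
    | p => some (hold (sym a), [p, head q default])

/-- The queue machine that simulates the Turing machine `M` on the input `l`. The letters of its
queue, followed by the held letter, form the cyclic word of a configuration of `M`; reading a
letter and appending the held one rotates this word. -/
def ofTM0 (M : TM0.Machine Γ Λ) (l : List Γ) :
    QueueMachine (TapeControl Γ Λ) (TapeLetter Γ Λ) where
  next
    | load, _ => some (hold (head default l.headI), l.tail.map sym ++ [mark])
    | hold p, head q a => headRule p a (M q a)
    | hold p, c => some (hold c, [p])
    | carry q a, sym y => some (hold (head q y), [sym a])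
    | carry q a, c => some (hold c, [sym a, head q default])

theorem nonerasing_ofTM0 (M : TM0.Machine Γ Λ) (l : List Γ) : (ofTM0 M l).Nonerasing := by
  rintro q c q' _ h rfl
  simp only [ofTM0, headRule] at h
  (repeat' split at h) <;> simp at h

variable {M : TM0.Machine Γ Λ} {l : List Γ}

theorem step_eq_wordCfg {q : TapeControl Γ Λ} {c p : TapeLetter Γ Λ} {o : List (TapeLetter Γ Λ)}
    (h : (ofTM0 M l).next q c = some (hold p, o)) (V : List (TapeLetter Γ Λ)) :
    (ofTM0 M l).step (q, c :: V) = some (wordCfg (V ++ o ++ [p])) := by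
  rw [wordCfg_concat]
  exact step_cons_of_next V h

theorem reaches_rotate {U : List (TapeLetter Γ Λ)} (hU : Headless U) (V : List (TapeLetter Γ Λ)) :
    Reaches (ofTM0 M l).step (wordCfg (U ++ V)) (wordCfg (V ++ U)) := by
  induction U generalizing V with
  | nil => rw [List.append_nil]; exact .refl
  | cons c U ih =>
    have hnext (p) : (ofTM0 M l).next (hold p) c = some (hold c, [p]) := by
      cases c with
      | head q a => exact absurd List.mem_cons_self (hU q a)
      | _ => rfl
    have rotate_letter (W) : Reaches (ofTM0 M l).step (wordCfg (c :: W)) (wordCfg (W ++ [c])) := by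
      rcases W.eq_nil_or_concat' with rfl | ⟨W, p, rfl⟩
      · exact .refl
      · rw [← List.cons_append, wordCfg_concat]
        exact .single (step_eq_wordCfg (hnext p) W)
    have hrest := ih (fun q a h => hU q a (List.mem_cons_of_mem c h)) (V ++ [c])
    rw [← List.append_assoc, List.append_assoc V] at hrest
    exact (rotate_letter (U ++ V)).trans hrest

theorem reaches₁_of_next {q : TapeControl Γ Λ} {c p : TapeLetter Γ Λ}
    {o V U U' : List (TapeLetter Γ Λ)} (h : (ofTM0 M l).next q c = some (hold p, o))
    (hU : Headless U) (hV : V ++ o ++ [p] = U ++ U') :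
    Reaches₁ (ofTM0 M l).step (q, c :: V) (wordCfg (U' ++ U)) :=
  .head' (step_eq_wordCfg h V) (hV ▸ reaches_rotate hU U')

theorem reaches₁_tapeWord_write {q q' : Λ} {a b : Γ} (h : M q a = some (q', .write b))
    (X Y : List Γ) : Reaches₁ (ofTM0 M l).step (wordCfg (tapeWord q a X Y))
      (wordCfg (tapeWord q' b X Y)) := by
  have hU := headless_map_sym_append_mark_cons (Λ := Λ) Y X.reverse
  unfold tapeWord
  obtain hnil | ⟨V, p, hV⟩ := List.eq_nil_or_concat' (Y.map sym ++ mark :: X.reverse.map sym)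
  · exact absurd hnil (by simp)
  · rw [hV] at hU ⊢
    rw [← List.cons_append, wordCfg_concat]
    exact reaches₁_of_next (U' := [head q' b]) (by simp only [ofTM0, h, headRule]) hU rfl

theorem reaches₁_tapeWord_move_left {q q' : Λ} {a : Γ} (h : M q a = some (q', .move .left))
    (X Y : List Γ) : Reaches₁ (ofTM0 M l).step (wordCfg (tapeWord q a X Y))
      (wordCfg (tapeWord q' X.headI X.tail (a :: Y))) := by
  cases X with
  | nil =>
    have hword : tapeWord q a [] Y = head q a :: Y.map sym ++ [mark] := rfl
    rw [hword, wordCfg_concat]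
    exact reaches₁_of_next (o := [mark, head q' default]) (p := sym a)
      (U' := [head q' default, sym a]) (by simp only [ofTM0, h, headRule])
      (headless_map_sym_append_mark_cons Y []) (by simp)
  | cons x X =>
    have hword : tapeWord q a (x :: X) Y =
        head q a :: (Y.map sym ++ mark :: X.reverse.map sym) ++ [sym x] := by simp [tapeWord]
    rw [hword, wordCfg_concat]
    exact reaches₁_of_next (o := [head q' x]) (p := sym a) (U' := [head q' x, sym a])
      (by simp only [ofTM0, h, headRule])
      (headless_map_sym_append_mark_cons Y X.reverse) (by simp)

theorem reaches₁_tapeWord_move_right {q q' : Λ} {a : Γ} (h : M q a = some (q', .move .right))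
    (X Y : List Γ) : Reaches₁ (ofTM0 M l).step (wordCfg (tapeWord q a X Y))
      (wordCfg (tapeWord q' Y.headI (a :: X) Y.tail)) := by
  have step_carry (W) (hW : W ≠ []) :
      (ofTM0 M l).step (wordCfg (head q a :: W)) = some (carry q' a, W) := by
    obtain rfl | ⟨V, p, rfl⟩ := W.eq_nil_or_concat'
    · exact absurd rfl hW
    · rw [← List.cons_append, wordCfg_concat]
      exact step_cons_of_next V (by simp only [ofTM0, h, headRule])
  refine .head (step_carry _ (by simp)) ?_
  cases Y with
  | nil =>
    have hword : tapeWord q' default (a :: X) [] =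
        [head q' default, mark] ++ (X.reverse.map sym ++ [sym a]) := by simp [tapeWord]
    exact hword ▸ reaches₁_of_next rfl (by simp [Headless]) (by simp)
  | cons y Y =>
    exact reaches₁_of_next (U' := [head q' y]) rfl
      (headless_map_sym_append_mark_cons Y (a :: X).reverse) (by simp)

theorem step_tapeWord_of_none {q : Λ} {a : Γ} (h : M q a = none) (X Y : List Γ) :
    (ofTM0 M l).step (wordCfg (tapeWord q a X Y)) = none := by
  have hne : Y.map sym ++ mark :: X.reverse.map sym ≠ ([] : List (TapeLetter Γ Λ)) := by simp
  simp only [wordCfg, tapeWord, List.dropLast_cons_of_ne_nil hne, step, ofTM0, h, headRule,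
    Option.map_none]

/-- A configuration of the Turing machine and the configuration of the queue machine that holds its
cyclic word; the lists `X` and `Y` are any lists of symbols describing the two half-tapes. -/
def TapeRel (c : TM0.Cfg Γ Λ) (d : TapeControl Γ Λ × List (TapeLetter Γ Λ)) : Prop :=
  ∃ X Y, c.Tape.left = ListBlank.mk X ∧ c.Tape.right = ListBlank.mk Y ∧
    d = wordCfg (tapeWord c.q c.Tape.head X Y)

theorem respects_ofTM0 (M : TM0.Machine Γ Λ) (l : List Γ) :
    StateTransition.Respects (TM0.step M) (ofTM0 M l).step TapeRel := by
  rintro ⟨q, ⟨a, L, R⟩⟩ _ ⟨X, Y, rfl, rfl, rfl⟩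
  rcases h : M q a with _ | ⟨q', (_ | _) | b⟩
  · simp only [TM0.step, h, Option.map_none]
    exact step_tapeWord_of_none h X Y
  · simp only [TM0.step, h, Option.map_some]
    exact ⟨_, ⟨_, _, rfl, rfl, rfl⟩, reaches₁_tapeWord_move_left h X Y⟩
  · simp only [TM0.step, h, Option.map_some]
    exact ⟨_, ⟨_, _, rfl, rfl, rfl⟩, reaches₁_tapeWord_move_right h X Y⟩
  · simp only [TM0.step, h, Option.map_some]
    exact ⟨_, ⟨_, _, rfl, rfl, rfl⟩, reaches₁_tapeWord_write h X Y⟩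

theorem reaches_load (x : TapeLetter Γ Λ) : Reaches (ofTM0 M l).step (load, [x])
    (wordCfg (tapeWord default l.headI [] l.tail)) := by
  refine .head (b := wordCfg (_ ++ [head default l.headI])) ?_
    (reaches_rotate (headless_map_sym_append_mark_cons l.tail []) [head default l.headI])
  rw [wordCfg_concat]
  rfl

theorem halts_ofTM0_iff (x : TapeLetter Γ Λ) :
    (ofTM0 M l).Halts (load, [x]) ↔ (TM0.eval M l).Dom := by
  rw [Halts, StateTransition.reaches_eval (reaches_load x)]
  exact StateTransition.tr_eval_dom (respects_ofTM0 M l) ⟨[], l.tail, rfl, rfl, rfl⟩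

end QueueMachine

namespace QueueMachine

open Turing TapeLetter TapeControl

variable {Γ Λ : Type*}

instance [Finite Γ] [Finite Λ] : Finite (TapeLetter Γ Λ) := by
  refine Finite.of_surjective (α := Option (Γ ⊕ Λ × Γ))
    (fun
      | none => mark
      | some (.inl a) => sym a
      | some (.inr (q, a)) => head q a) ?_
  rintro (_ | a | ⟨q, a⟩)
  exacts [⟨none, rfl⟩, ⟨some (.inl a), rfl⟩, ⟨some (.inr (q, a)), rfl⟩]

instance [Finite Γ] [Finite Λ] : Finite (TapeControl Γ Λ) := by
  refine Finite.of_surjective (α := Option (TapeLetter Γ Λ ⊕ Λ × Γ))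
    (fun
      | none => load
      | some (.inl p) => hold p
      | some (.inr (q, a)) => carry q a) ?_
  rintro (_ | p | ⟨q, a⟩)
  exacts [⟨none, rfl⟩, ⟨some (.inl p), rfl⟩, ⟨some (.inr (q, a)), rfl⟩]

theorem primrec_next_ofTM0 {α : Type*} [Primcodable α] [Primcodable Γ] [Finite Γ]
    [Inhabited Γ] [Inhabited Λ] [Primcodable (TapeLetter Γ Λ)] [Primcodable (TapeControl Γ Λ)]
    (M : TM0.Machine Γ Λ) {l : α → List Γ} (hl : Primrec l) (q : TapeControl Γ Λ)
    (c : TapeLetter Γ Λ) : Primrec fun x => (ofTM0 M (l x)).next q c := by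
  cases q with
  | load =>
    have hhead : Primrec fun a : Γ => (hold (head default a) : TapeControl Γ Λ) :=
      Primrec.dom_finite _
    have hsym : Primrec (sym : Γ → TapeLetter Γ Λ) := Primrec.dom_finite _
    refine Primrec.option_some.comp ((hhead.comp (Primrec.list_headI.comp hl)).pair ?_)
    exact Primrec.list_append.comp
      (Primrec.list_map (Primrec.list_tail.comp hl) (hsym.comp Primrec.snd)) (Primrec.const _)
  | hold p => cases c <;> exact Primrec.const _
  | carry q a => cases c <;> exact Primrec.const _

theorem exists_computable_code_ofTM0 {α : Type*} [Primcodable α] [Primcodable Γ] [Finite Γ]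
    [Finite Λ] [Inhabited Γ] [Inhabited Λ] (M : TM0.Machine Γ Λ) {l : α → List Γ}
    (hl : Primrec l) : ∃ c : α → WACode, Computable c ∧
      ∀ x, (WAWellFormed (c x) ∧ WAUniversalRev (c x)) ↔ (TM0.eval M (l x)).Dom := by
  obtain ⟨_⟩ := nonempty_primcodable_of_finite (TapeLetter Γ Λ)
  obtain ⟨_⟩ := nonempty_primcodable_of_finite (TapeControl Γ Λ)
  obtain ⟨c, hc, hcode⟩ := exists_computable_code (T := fun x => ofTM0 M (l x))
    (primrec_next_ofTM0 M hl) (fun x => nonerasing_ofTM0 M (l x)) load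
  have : Nonempty (TapeLetter Γ Λ) := ⟨mark⟩
  refine ⟨c, hc, fun x => (hcode x).trans ?_⟩
  simp only [halts_ofTM0_iff]
  exact forall_const _

end QueueMachine

/-! ### A Turing machine with an undecidable halting problem on unary inputs -/

namespace UnaryHalting

open Turing Turing.PartrecToTM2

theorem primrec_log {b : ℕ} (hb : 1 < b) : Primrec (Nat.log b) := by
  have hpow : Primrec₂ fun m n : ℕ => m ^ n := Primrec₂.unpaired'.1 Nat.Primrec.pow
  have hle : PrimrecRel fun n k : ℕ => b ^ k ≤ n :=
    Primrec.nat_le.comp (hpow.comp (Primrec.const b) Primrec.snd) Primrec.fst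
  refine (Primrec.nat_findGreatest Primrec.id hle).of_eq fun n => Nat.findGreatest_eq_iff.2
    ⟨Nat.log_le_self b n, fun hlog => Nat.pow_log_le_self b ?_,
      fun k hk _ => (Nat.lt_pow_of_log_lt hb hk).not_ge⟩
  rintro rfl
  exact hlog (Nat.log_zero_right b)

theorem log_two_pow_sub_one_succ (n : ℕ) : Nat.log 2 (2 ^ n - 1 + 1) = n := by
  rw [Nat.sub_add_cancel Nat.one_le_two_pow, Nat.log_pow one_lt_two]

-- In binary, `2 ^ n - 1` consists of `n` digits `1`; the tape then holds a unary input.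
open Nat.Partrec in
theorem exists_code_unary : ∃ c : ToPartrec.Code,
    ¬ ComputablePred fun n : ℕ => (c.eval [2 ^ n - 1]).Dom := by
  let g : ℕ →. ℕ := fun m => Code.eval (Denumerable.ofNat Code (Nat.log 2 (m + 1))) 0
  have hg : Partrec g := Code.eval_part.comp
    ((Computable.ofNat Code).comp ((primrec_log one_lt_two).comp Primrec.succ).to_comp)
    (Computable.const 0)
  have hgv (c : Code) : g (2 ^ Encodable.encode c - 1) = c.eval 0 := by
    simp only [g, log_two_pow_sub_one_succ, Denumerable.ofNat_encode]
  obtain ⟨c, hc⟩ := ToPartrec.Code.exists_code (Nat.Partrec'.part_iff₁.2 hg)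
  refine ⟨c, fun h => ComputablePred.halting_problem 0
    (ComputablePred.computable_of_manyOneReducible ⟨_, Computable.encode, fun d => ?_⟩ h)⟩
  have hcd := hc ((2 ^ Encodable.encode d - 1) ::ᵥ List.Vector.nil)
  rw [List.Vector.head_cons, hgv] at hcd
  exact iff_of_eq (congrArg Part.Dom hcd.symm)

theorem trNat_two_pow_sub_one (n : ℕ) : trNat (2 ^ n - 1) = List.replicate n Γ'.bit1 := by
  induction n with
  | zero => simp
  | succ n ih =>
    have hpred : 2 ^ (n + 1) - 1 = 2 * (2 ^ n - 1) + 1 := by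
      have := Nat.one_le_two_pow (n := n)
      rw [pow_succ]; omega
    have trNat_bit1 (m : ℕ) : trNat (2 * m + 1) = Γ'.bit1 :: trNat m := by
      have : ((2 * m + 1 : ℕ) : Num) = Num.bit1 (m : Num) := by
        rw [← Num.bit1_of_bit1]
        push_cast
        ring
      rw [trNat, this, trNat]
      cases (m : Num) <;> rfl
    rw [hpred, trNat_bit1, ih, List.replicate_succ]

instance : Fintype K' where
  elems := {.main, .rev, .aux, .stack}
  complete k := by cases k <;> decide

theorem exists_trInit_eq_cons_replicate : ∃ a t : TM2to1.Γ' K' fun _ => Γ', ∀ n : ℕ,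
    TM2to1.trInit K'.main (trList [2 ^ n - 1]) = a :: List.replicate n t := by
  refine ⟨(true, Function.update (fun _ => none) K'.main (some Γ'.cons)),
    (false, Function.update (fun _ => none) K'.main (some Γ'.bit1)), fun n => ?_⟩
  have hrev : (trList [2 ^ n - 1]).reverse = Γ'.cons :: List.replicate n Γ'.bit1 := by
    simp [trNat_two_pow_sub_one]
  rw [TM2to1.trInit, hrev]
  exact congrArg (List.cons _) (List.map_replicate ..)

theorem dom_eval_tr_iff (c : ToPartrec.Code) (v : List ℕ) :
    letI : Inhabited Λ' := ⟨trNormal c Cont'.halt⟩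
    (TM0.eval (TM1to0.tr (TM2to1.tr tr)) (TM2to1.trInit K'.main (trList v))).Dom ↔
      (c.eval v).Dom := by
  let : Inhabited Λ' := ⟨trNormal c Cont'.halt⟩
  have init_eq : TM2.init K'.main (trList v) = init c v := by
    refine congrArg (TM2.Cfg.mk _ _) (funext fun k => ?_)
    cases k <;> rfl
  rw [TM1to0.tr_eval]
  refine (TM2to1.tr_eval_dom (M := tr) K'.main (trList v)).trans ?_
  unfold TM2.eval
  rw [init_eq, tr_eval c v]
  rfl

theorem exists_restrict_states {Γ Λ : Type*} [Inhabited Γ] [Inhabited Λ] {M : TM0.Machine Γ Λ}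
    {S : Set Λ} (hS : TM0.Supports M S) :
    ∃ (_ : Inhabited S) (M' : TM0.Machine Γ S), ∀ l, (TM0.eval M' l).Dom ↔ (TM0.eval M l).Dom := by
  classical
  let start : Inhabited S := ⟨⟨default, hS.1⟩⟩
  let restrict : PointedMap Λ S := ⟨fun q => if h : q ∈ S then ⟨q, h⟩ else default, dif_pos hS.1⟩
  let idΓ : PointedMap Γ Γ := ⟨id, rfl⟩
  have hrestrict (q) (hq : q ∈ S) : (restrict q : Λ) = q := congrArg Subtype.val (dif_pos hq)
  refine ⟨start, M.map idΓ idΓ restrict Subtype.val, fun l => ?_⟩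
  have hinit : (TM0.init l).map idΓ restrict = TM0.init l := by
    rw [TM0.map_init]
    exact congrArg TM0.init (List.map_id l)
  exact StateTransition.tr_eval_dom
    (TM0.Machine.map_respects M idΓ idΓ restrict Subtype.val hS (fun _ => rfl) hrestrict)
    ⟨hS.1, hinit⟩

theorem exists_finite_machine_unary : ∃ (Γ Λ : Type) (_ : Inhabited Γ) (_ : Inhabited Λ)
    (_ : Finite Γ) (_ : Finite Λ) (M : TM0.Machine Γ Λ) (a t : Γ),
    ¬ ComputablePred fun n => (TM0.eval M (a :: List.replicate n t)).Dom := by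
  obtain ⟨c, hc⟩ := exists_code_unary
  let : Inhabited Λ' := ⟨trNormal c Cont'.halt⟩
  have hS := TM1to0.tr_supports (TM2to1.tr tr)
    (TM2to1.tr_supports tr (tr_supports c Cont'.halt))
  obtain ⟨_, M, hM⟩ := exists_restrict_states hS
  obtain ⟨a, t, hinput⟩ := exists_trInit_eq_cons_replicate
  refine ⟨_, _, inferInstance, inferInstance, inferInstance, inferInstance, M, a, t,
    fun h => hc (h.of_eq fun n => ?_)⟩
  rw [← hinput]
  exact (hM _).trans (dom_eval_tr_iff c _)

end UnaryHalting

theorem primrec_cons_replicate {α : Type*} [Primcodable α] (a t : α) :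
    Primrec fun n => a :: List.replicate n t := by
  refine (Primrec.list_cons.comp (Primrec.const a)
    (Primrec.list_map Primrec.list_range (Primrec₂.const t))).of_eq fun n => ?_
  simp

/-- The universality problem for integer weighted automata on infinite words under reverse
acceptance is undecidable. -/
theorem universality_reverse_weighted_automata_undecidable :
    ¬ ComputablePred (fun c : WACode => WAWellFormed c ∧ WAUniversalRev c) := by
  intro huniv
  obtain ⟨Γ, Λ, _, _, _, _, M, a, t, hM⟩ := UnaryHalting.exists_finite_machine_unary
  obtain ⟨_⟩ := nonempty_primcodable_of_finite Γ
  obtain ⟨c, hc, hcode⟩ := QueueMachine.exists_computable_code_ofTM0 M (primrec_cons_replicate a t)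
  exact hM (ComputablePred.computable_of_manyOneReducible ⟨c, hc, fun n => (hcode n).symm⟩ huniv)
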